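/- arXiv:2405.18707 — 3 statements merged into one kernel-verified Lean document; each statement's English description precedes it below -/
import Mathlib

section
/- Let N ≥ 2 and 1 ≤ K ≤ N be integers, let x_1,…,x_N and c be vectors in a real inner product space, let x̄ = (1/N)·Σ_{n=1}^N x_n, and let S be a uniformly distributed random subset of size K of {1,…,N}. If (1/N)·Σ_{n=1}^N ‖x_n − c‖² ≤ η²G² for some reals η and G, then E‖(1/K)·Σ_{n∈S} x_n − x̄‖² ≤ (N/K − 1)·(N/(N−1))·η²G². -/
theorem aux_single (N K : ℕ) (hN : 2 ≤ N) (hK : 1 ≤ K) (i : Fin N) :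
    (N : ℝ) * (((Finset.powersetCard K (Finset.univ : Finset (Fin N))).filter
      (fun S => i ∈ S ∧ i ∈ S)).card : ℝ) = K * (N.choose K : ℝ) := by
  have h := Finset.card_filter_powersetCard_subset {i} (Finset.univ : Finset (Fin N)) K
    (Finset.subset_univ _) (by simpa using hK)
  simp only [Finset.singleton_subset_iff, Finset.card_univ, Fintype.card_fin,
    Finset.card_singleton] at h
  simp only [and_self]
  rw [h]
  obtain ⟨m, rfl⟩ := Nat.exists_eq_add_of_le' hN
  obtain ⟨k, rfl⟩ := Nat.exists_eq_add_of_le' hK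
  have := Nat.add_one_mul_choose_eq (m+1) k
  simp only [Nat.add_sub_cancel, show m + 2 - 1 = m + 1 by omega]
  rw [mul_comm ((k+1 : ℕ) : ℝ)]
  exact_mod_cast this

theorem aux_pair (N K : ℕ) (hN : 2 ≤ N) (hK : 1 ≤ K) (i j : Fin N) (hij : i ≠ j) :
    (N : ℝ) * ((N : ℝ) - 1) * (((Finset.powersetCard K (Finset.univ : Finset (Fin N))).filter
      (fun S => i ∈ S ∧ j ∈ S)).card : ℝ) = K * ((K : ℝ) - 1) * (N.choose K : ℝ) := by
  rcases Nat.lt_or_ge K 2 with h1 | h2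
  · obtain rfl : K = 1 := by omega
    have : (Finset.powersetCard 1 (Finset.univ : Finset (Fin N))).filter
      (fun S => i ∈ S ∧ j ∈ S) = ∅ := by
      apply Finset.filter_eq_empty_iff.2
      rintro S hS ⟨hi, hj⟩
      have := (Finset.mem_powersetCard.1 hS).2
      exact hij (Finset.card_le_one.1 this.le i hi j hj)
    rw [this]; simp
  have h := Finset.card_filter_powersetCard_subset {i, j} (Finset.univ : Finset (Fin N)) K
    (Finset.subset_univ _) (by rw [Finset.card_pair hij]; exact h2)
  simp only [Finset.insert_subset_iff, Finset.singleton_subset_iff, Finset.card_univ,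
    Fintype.card_fin, Finset.card_pair hij] at h
  rw [h]
  obtain ⟨m, rfl⟩ := Nat.exists_eq_add_of_le' hN
  obtain ⟨k, rfl⟩ := Nat.exists_eq_add_of_le' h2
  have e1 := Nat.add_one_mul_choose_eq (m+1) (k+1)
  have e2 := Nat.add_one_mul_choose_eq m k
  simp only [Nat.add_sub_cancel]
  have e1' : ((m : ℝ) + 1 + 1) * ((m+1).choose (k+1) : ℝ)
    = ((m+2).choose (k+2) : ℝ) * (k + 1 + 1) := by exact_mod_cast e1
  have e2' : ((m : ℝ) + 1) * (m.choose k : ℝ)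
    = ((m+1).choose (k+1) : ℝ) * (k + 1) := by exact_mod_cast e2
  push_cast
  linear_combination ((m : ℝ) + 2) * e2' + ((k : ℝ) + 1) * e1'

theorem aux_sum {E : Type*} [NormedAddCommGroup E] [InnerProductSpace ℝ E]
    (N K : ℕ) (hN : 2 ≤ N) (hK : 1 ≤ K) (y : Fin N → E) (hy : ∑ n, y n = 0) :
    (N : ℝ) * ((N : ℝ) - 1) * ∑ S ∈ Finset.powersetCard K (Finset.univ : Finset (Fin N)),
      ‖∑ n ∈ S, y n‖ ^ 2 = K * ((N : ℝ) - K) * (N.choose K : ℝ) * ∑ n, ‖y n‖ ^ 2 := by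
  have h1 : ∀ S : Finset (Fin N), ‖∑ n ∈ S, y n‖ ^ 2
      = ∑ i, ∑ j, if i ∈ S ∧ j ∈ S then inner ℝ (y i) (y j) else 0 := by
    intro S
    have : ∑ n ∈ S, y n = ∑ n, if n ∈ S then y n else 0 := by simp
    rw [← real_inner_self_eq_norm_sq, this, sum_inner]
    refine Finset.sum_congr rfl fun i _ => ?_
    rw [inner_sum]
    refine Finset.sum_congr rfl fun j _ => ?_
    by_cases hi : i ∈ S <;> by_cases hj : j ∈ S <;> simp [hi, hj]
  have h2 : ∑ S ∈ Finset.powersetCard K (Finset.univ : Finset (Fin N)), ‖∑ n ∈ S, y n‖ ^ 2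
      = ∑ i, ∑ j, (((Finset.powersetCard K (Finset.univ : Finset (Fin N))).filter
      (fun S => i ∈ S ∧ j ∈ S)).card : ℝ) * inner ℝ (y i) (y j) := by
    simp_rw [h1]
    rw [Finset.sum_comm]
    refine Finset.sum_congr rfl fun i _ => ?_
    rw [Finset.sum_comm]
    refine Finset.sum_congr rfl fun j _ => ?_
    rw [← Finset.sum_filter, Finset.sum_const, nsmul_eq_mul]
  have h3 : ∀ i, ∑ j, inner ℝ (y i) (y j) = 0 := by
    intro i
    rw [← inner_sum, hy, inner_zero_right]
  have h4 : ∀ i j, (N : ℝ) * ((N : ℝ) - 1) *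
      ((((Finset.powersetCard K (Finset.univ : Finset (Fin N))).filter
      (fun S => i ∈ S ∧ j ∈ S)).card : ℝ) * inner ℝ (y i) (y j))
      = K * ((K : ℝ) - 1) * (N.choose K : ℝ) * inner ℝ (y i) (y j) +
        if i = j then K * ((N : ℝ) - K) * (N.choose K : ℝ) * ‖y i‖ ^ 2 else 0 := by
    intro i j
    split_ifs with h
    · subst h
      have := aux_single N K hN hK i
      rw [real_inner_self_eq_norm_sq]
      linear_combination ((N : ℝ) - 1) * ‖y i‖ ^ 2 * this
    · have := aux_pair N K hN hK i j h
      linear_combination inner ℝ (y i) (y j) * this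
  rw [h2]
  simp_rw [Finset.mul_sum, h4, Finset.sum_add_distrib, ← Finset.mul_sum, h3]
  simp [Finset.mul_sum]

/-- Lemma 1 of the appendix: if the local models are within squared distance `η²G²`
of the shared model `c` on average, then the variance of the uniformly sampled
`K`-subset average around the full average is at most `(N/K − 1)·(N/(N−1))·η²G²`. -/
theorem sampled_average_deviation_bound
    {E : Type*} [NormedAddCommGroup E] [InnerProductSpace ℝ E]
    (N K : ℕ) (hN : 2 ≤ N) (hK : 1 ≤ K) (hKN : K ≤ N) (x : Fin N → E) (c : E)
    (η G : ℝ)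
    (hbound : ((N : ℝ))⁻¹ * ∑ n, ‖x n - c‖ ^ 2 ≤ η ^ 2 * G ^ 2) :
    (((Finset.powersetCard K (Finset.univ : Finset (Fin N))).card : ℝ))⁻¹ *
        ∑ S ∈ Finset.powersetCard K (Finset.univ : Finset (Fin N)),
          ‖(((K : ℝ))⁻¹ • ∑ n ∈ S, x n) - ((N : ℝ))⁻¹ • ∑ n, x n‖ ^ 2
      ≤ ((N : ℝ) / (K : ℝ) - 1) * ((N : ℝ) / ((N : ℝ) - 1)) * (η ^ 2 * G ^ 2) := by
  have hN' : (2 : ℝ) ≤ N := by exact_mod_cast hN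
  have hK' : (1 : ℝ) ≤ K := by exact_mod_cast hK
  have hKN' : (K : ℝ) ≤ N := by exact_mod_cast hKN
  have hC : (0 : ℝ) < N.choose K := by exact_mod_cast Nat.choose_pos hKN
  have hN0 : (N : ℝ) ≠ 0 := by linarith
  have hK0 : (K : ℝ) ≠ 0 := by linarith
  have hN1 : (0 : ℝ) < N - 1 := by linarith
  set b : E := ((N : ℝ))⁻¹ • ∑ n, x n with hb
  have hNb : (N : ℝ) • b = ∑ n, x n := by rw [hb, smul_inv_smul₀ hN0]
  have hy : ∑ n, (x n - b) = 0 := by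
    rw [Finset.sum_sub_distrib, ← hNb]
    simp [← Nat.cast_smul_eq_nsmul ℝ]
  have hS := aux_sum N K hN hK (fun n => x n - b) hy
  have e1 : ∑ S ∈ Finset.powersetCard K (Finset.univ : Finset (Fin N)),
      ‖(((K : ℝ))⁻¹ • ∑ n ∈ S, x n) - b‖ ^ 2 = ((K : ℝ)⁻¹) ^ 2 *
      ∑ S ∈ Finset.powersetCard K (Finset.univ : Finset (Fin N)), ‖∑ n ∈ S, (x n - b)‖ ^ 2 := by
    rw [Finset.mul_sum]
    refine Finset.sum_congr rfl fun S hS => ?_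
    have hc := (Finset.mem_powersetCard.1 hS).2
    have : (((K : ℝ))⁻¹ • ∑ n ∈ S, x n) - b = (K : ℝ)⁻¹ • ∑ n ∈ S, (x n - b) := by
      rw [Finset.sum_sub_distrib, Finset.sum_const, hc, ← Nat.cast_smul_eq_nsmul ℝ, smul_sub,
        inv_smul_smul₀ hK0]
    rw [this, norm_smul, mul_pow, Real.norm_eq_abs, sq_abs]
  have e2 : ∑ n, ‖x n - b‖ ^ 2 ≤ ∑ n, ‖x n - c‖ ^ 2 := by
    have : ∀ n, ‖x n - c‖ ^ 2 = ‖x n - b‖ ^ 2 + 2 * inner ℝ (x n - b) (b - c) + ‖b - c‖ ^ 2 := by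
      intro n
      rw [← norm_add_sq_real, sub_add_sub_cancel]
    simp_rw [this, Finset.sum_add_distrib, ← Finset.mul_sum, ← sum_inner, hy, inner_zero_left]
    have : 0 ≤ ∑ _n : Fin N, ‖b - c‖ ^ 2 := Finset.sum_nonneg fun _ _ => by positivity
    linarith
  rw [e1, Finset.card_powersetCard, Finset.card_univ, Fintype.card_fin]
  set T := ∑ S ∈ Finset.powersetCard K (Finset.univ : Finset (Fin N)), ‖∑ n ∈ S, (x n - b)‖ ^ 2
  set V := ∑ n, ‖x n - b‖ ^ 2
  have hV : 0 ≤ V := Finset.sum_nonneg fun _ _ => by positivity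
  have hT : ((N.choose K : ℝ))⁻¹ * (((K : ℝ)⁻¹) ^ 2 * T)
      = ((N : ℝ) / K - 1) * (1 / (N - 1)) * ((N : ℝ)⁻¹ * V) := by
    have hne := hN1.ne'
    field_simp
    linear_combination hS
  rw [hT]
  have hf : 0 ≤ (N : ℝ) / K - 1 := by
    rw [sub_nonneg, one_le_div (by linarith)]; exact hKN'
  have hle : (N : ℝ)⁻¹ * V ≤ η ^ 2 * G ^ 2 :=
    (mul_le_mul_of_nonneg_left e2 (by positivity)).trans hbound
  gcongr
  linarith
end

section
/- Let H be a real inner product space, ℓ > 0 and μ > 0 reals, and L_1,…,L_N : H → ℝ differentiable functions such that each L_n is ℓ-smooth, i.e., L_n(v) ≤ L_n(w) + ⟨∇L_n(w), v − w⟩ + (ℓ/2)‖v − w‖² for all v, w, and μ-strongly convex, i.e., L_n(v) ≥ L_n(w) + ⟨∇L_n(w), v − w⟩ + (μ/2)‖v − w‖² for all v, w. Let p_1,…,p_N ≥ 0 with Σ p_n = 1, let L = Σ p_n L_n, let ω* be a global minimizer of L, let L_n* = inf L_n, and let γ = L(ω*) − Σ p_n L_n* (which is ≥ 0). Let ω_1,…,ω_N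 ∈ H, let ω = Σ p_n ω_n, and let ḡ = Σ p_n ∇L_n(ω_n). Then for every step size η with 0 < η ≤ 1/(4ℓ): ‖ω − ω* − η·ḡ‖² ≤ (1 − μη)·‖ω − ω*‖² + 2·Σ_{n=1}^N p_n‖ω − ω_n‖² + 6ℓη²·γ. -/
open scoped RealInnerProductSpace

theorem aux_jensen {H : Type*} [NormedAddCommGroup H] [InnerProductSpace ℝ H]
    {N : ℕ} (p : Fin N → ℝ) (hp : ∀ n, 0 ≤ p n) (hp1 : ∑ n, p n = 1) (x : Fin N → H) :
    ‖∑ n, p n • x n‖ ^ 2 ≤ ∑ n, p n * ‖x n‖ ^ 2 := by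
  set m := ∑ n, p n • x n with hm
  have h1 : ∑ n, p n * (2 * ⟪x n, m⟫ - ‖m‖ ^ 2) ≤ ∑ n, p n * ‖x n‖ ^ 2 := by
    apply Finset.sum_le_sum
    intro n _
    apply mul_le_mul_of_nonneg_left _ (hp n)
    have := norm_sub_sq_real (x n) m
    nlinarith [sq_nonneg ‖x n - m‖]
  have h2 : ∑ n, p n * ⟪x n, m⟫ = ‖m‖ ^ 2 := by
    rw [← real_inner_self_eq_norm_sq]
    conv_rhs => rw [hm, sum_inner]
    simp only [real_inner_smul_left]
    rfl
  have h3 : ∑ n, p n * (2 * ⟪x n, m⟫ - ‖m‖ ^ 2)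
      = 2 * ∑ n, p n * ⟪x n, m⟫ - (∑ n, p n) * ‖m‖ ^ 2 := by
    rw [Finset.mul_sum, Finset.sum_mul, ← Finset.sum_sub_distrib]
    apply Finset.sum_congr rfl
    intro n _
    ring
  rw [h3, h2, hp1] at h1
  linarith

/-- Smoothness bounds the squared gradient by the optimality gap. -/
theorem aux_grad {H : Type*} [NormedAddCommGroup H] [InnerProductSpace ℝ H]
    (ℓ : ℝ) (hℓ : 0 < ℓ) (f : H → ℝ) (g : H → H)
    (hs : ∀ v w, f v ≤ f w + ⟪g w, v - w⟫ + ℓ / 2 * ‖v - w‖ ^ 2)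
    (c : ℝ) (hc : ∀ v, c ≤ f v) (w : H) : ‖g w‖ ^ 2 ≤ 2 * ℓ * (f w - c) := by
  have h := hs (w - ℓ⁻¹ • g w) w
  have h2 := hc (w - ℓ⁻¹ • g w)
  have e : w - ℓ⁻¹ • g w - w = (-ℓ⁻¹) • g w := by rw [neg_smul]; abel
  rw [e, real_inner_smul_right, real_inner_self_eq_norm_sq, norm_smul, mul_pow,
    Real.norm_eq_abs, sq_abs] at h
  have h3 : 2 * ℓ * (-ℓ⁻¹ * ‖g w‖ ^ 2 + ℓ / 2 * ((-ℓ⁻¹) ^ 2 * ‖g w‖ ^ 2)) = - ‖g w‖ ^ 2 := by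
    field_simp
    ring
  have h4 : 0 ≤ 2 * ℓ * (f w - c + (-ℓ⁻¹ * ‖g w‖ ^ 2 + ℓ / 2 * ((-ℓ⁻¹) ^ 2 * ‖g w‖ ^ 2))) :=
    mul_nonneg (by positivity) (by linarith)
  rw [mul_add, h3] at h4
  linarith

/-- The one-step descent inequality `B₁` of Lemma 2: under `ℓ`-smoothness and
`μ`-strong convexity of the local losses, for step size `0 < η ≤ 1/(4ℓ)`,
`‖ω − ω* − η ḡ‖² ≤ (1 − μη)‖ω − ω*‖² + 2 ∑ pₙ‖ω − ωₙ‖² + 6ℓη²γ`. -/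
theorem one_step_descent_bound
    {H : Type*} [NormedAddCommGroup H] [InnerProductSpace ℝ H]
    (N : ℕ) (ℓ μ : ℝ) (hℓ : 0 < ℓ) (hμ : 0 < μ)
    (L : Fin N → H → ℝ) (gradL : Fin N → H → H)
    (hdiff : ∀ n w, HasFDerivAt (L n) (innerSL ℝ (gradL n w)) w)
    (hsmooth : ∀ n v w, L n v ≤ L n w + ⟪gradL n w, v - w⟫ + ℓ / 2 * ‖v - w‖ ^ 2)
    (hsconv : ∀ n v w, L n v ≥ L n w + ⟪gradL n w, v - w⟫ + μ / 2 * ‖v - w‖ ^ 2)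
    (p : Fin N → ℝ) (hp : ∀ n, 0 ≤ p n) (hp1 : ∑ n, p n = 1)
    (ωstar : H) (hmin : ∀ w, ∑ n, p n * L n ωstar ≤ ∑ n, p n * L n w)
    (Lstar : Fin N → ℝ) (hLstar : ∀ n, IsGLB (Set.range (L n)) (Lstar n))
    (γ : ℝ) (hγ : γ = (∑ n, p n * L n ωstar) - ∑ n, p n * Lstar n)
    (ωs : Fin N → H) (ω : H) (hω : ω = ∑ n, p n • ωs n)
    (gbar : H) (hg : gbar = ∑ n, p n • gradL n (ωs n))
    (η : ℝ) (hη : 0 < η) (hη' : η ≤ 1 / (4 * ℓ)) :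
    ‖ω - ωstar - η • gbar‖ ^ 2
      ≤ (1 - μ * η) * ‖ω - ωstar‖ ^ 2 + 2 * ∑ n, p n * ‖ω - ωs n‖ ^ 2
        + 6 * ℓ * η ^ 2 * γ := by
  have hc : ∀ n v, Lstar n ≤ L n v := fun n v => (hLstar n).1 ⟨v, rfl⟩
  have hG : ∀ n w, ‖gradL n w‖ ^ 2 ≤ 2 * ℓ * (L n w - Lstar n) := fun n w =>
    aux_grad ℓ hℓ (L n) (gradL n) (hsmooth n) _ (hc n) w
  have hηℓ : 4 * ℓ * η ≤ 1 := by
    rw [le_div_iff₀ (by positivity)] at hη'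
    linarith
  have key : ∀ (a b : H), -(2 * η * ⟪a, b⟫) ≤ ‖a‖ ^ 2 + η ^ 2 * ‖b‖ ^ 2 := by
    intro a b
    have := norm_add_sq_real a (η • b)
    rw [real_inner_smul_right, norm_smul, mul_pow, Real.norm_eq_abs, sq_abs] at this
    nlinarith [sq_nonneg ‖a + η • b‖]
  have h0 : ω - ωstar - η • gbar = ∑ n, p n • (ω - ωstar - η • gradL n (ωs n)) := by
    simp only [smul_sub (p _) (ω - ωstar), Finset.sum_sub_distrib, ← Finset.sum_smul, hp1,
      one_smul, hg, Finset.smul_sum]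
    congr 1
    apply Finset.sum_congr rfl
    intro n _
    rw [smul_comm]
  have h0' : ω - ωstar = ∑ n, p n • (ωs n - ωstar) := by
    simp only [smul_sub, Finset.sum_sub_distrib, ← Finset.sum_smul, hp1, one_smul, hω]
  have J1 := aux_jensen p hp hp1 (fun n => ω - ωstar - η • gradL n (ωs n))
  have J2 := aux_jensen p hp hp1 (fun n => ωs n - ωstar)
  simp only [← h0] at J1
  simp only [← h0'] at J2
  have I1 : ∀ n, ‖ω - ωstar - η • gradL n (ωs n)‖ ^ 2 ≤ ‖ω - ωstar‖ ^ 2 + ‖ω - ωs n‖ ^ 2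
      + 4 * ℓ * η ^ 2 * (L n (ωs n) - Lstar n) - 2 * η * (L n (ωs n) - L n ωstar)
      - η * μ * ‖ωs n - ωstar‖ ^ 2 := by
    intro n
    have e := norm_sub_sq_real (ω - ωstar) (η • gradL n (ωs n))
    rw [real_inner_smul_right, norm_smul, mul_pow, Real.norm_eq_abs, sq_abs] at e
    have k := key (ω - ωs n) (gradL n (ωs n))
    have sc := mul_le_mul_of_nonneg_left (hsconv n ωstar (ωs n)) (by positivity : 0 ≤ 2 * η)
    rw [norm_sub_rev ωstar (ωs n)] at sc
    have i1 : ⟪ω - ωstar, gradL n (ωs n)⟫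
        = ⟪ω - ωs n, gradL n (ωs n)⟫ - ⟪gradL n (ωs n), ωstar - ωs n⟫ := by
      rw [real_inner_comm (ωstar - ωs n), ← inner_sub_left]
      congr 1
      abel
    have g := mul_le_mul_of_nonneg_left (hG n (ωs n)) (by positivity : 0 ≤ 2 * η ^ 2)
    rw [e, i1]
    linarith
  have I2 : ∀ n, 2 * η * L n ω - 2 * η ^ 2 * ℓ * (L n ω - Lstar n) - ‖ω - ωs n‖ ^ 2
      ≤ 2 * η * L n (ωs n) := by
    intro n
    have k := key (ωs n - ω) (gradL n ω)
    rw [real_inner_comm, norm_sub_rev] at k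
    have sc := mul_le_mul_of_nonneg_left (hsconv n (ωs n) ω) (by positivity : 0 ≤ 2 * η)
    have g := mul_le_mul_of_nonneg_left (hG n ω) (by positivity : 0 ≤ η ^ 2)
    have : 0 ≤ 2 * η * (μ / 2 * ‖ωs n - ω‖ ^ 2) := by positivity
    linarith
  have S1 := Finset.sum_le_sum (s := Finset.univ)
    (fun n _ => mul_le_mul_of_nonneg_left (I1 n) (hp n))
  have S2 := Finset.sum_le_sum (s := Finset.univ)
    (fun n _ => mul_le_mul_of_nonneg_left (I2 n) (hp n))
  have hBD := hmin ω
  have hDC : ∑ n, p n * Lstar n ≤ ∑ n, p n * L n ωstar :=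
    Finset.sum_le_sum (fun n _ => mul_le_mul_of_nonneg_left (hc n _) (hp n))
  have hS : 0 ≤ ∑ n, p n * ‖ω - ωs n‖ ^ 2 :=
    Finset.sum_nonneg (fun n _ => mul_nonneg (hp n) (sq_nonneg _))
  have E1 : ∑ n, p n * (‖ω - ωstar‖ ^ 2 + ‖ω - ωs n‖ ^ 2
      + 4 * ℓ * η ^ 2 * (L n (ωs n) - Lstar n) - 2 * η * (L n (ωs n) - L n ωstar)
      - η * μ * ‖ωs n - ωstar‖ ^ 2)
      = (∑ n, p n) * ‖ω - ωstar‖ ^ 2 + ∑ n, p n * ‖ω - ωs n‖ ^ 2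
        + 4 * ℓ * η ^ 2 * (∑ n, p n * L n (ωs n) - ∑ n, p n * Lstar n)
        - 2 * η * (∑ n, p n * L n (ωs n) - ∑ n, p n * L n ωstar)
        - η * μ * ∑ n, p n * ‖ωs n - ωstar‖ ^ 2 := by
    simp only [← Finset.sum_sub_distrib, Finset.mul_sum, Finset.sum_mul, ← Finset.sum_add_distrib]
    apply Finset.sum_congr rfl
    intro n _
    ring
  have E2 : ∑ n, p n * (2 * η * L n ω - 2 * η ^ 2 * ℓ * (L n ω - Lstar n) - ‖ω - ωs n‖ ^ 2)
      = 2 * η * ∑ n, p n * L n ω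
        - 2 * η ^ 2 * ℓ * (∑ n, p n * L n ω - ∑ n, p n * Lstar n)
        - ∑ n, p n * ‖ω - ωs n‖ ^ 2 := by
    simp only [← Finset.sum_sub_distrib, Finset.mul_sum]
    apply Finset.sum_congr rfl
    intro n _
    ring
  have E3 : ∑ n, p n * (2 * η * L n (ωs n)) = 2 * η * ∑ n, p n * L n (ωs n) := by
    rw [Finset.mul_sum]
    apply Finset.sum_congr rfl
    intro n _
    ring
  rw [E1, hp1] at S1
  rw [E2, E3] at S2
  rw [hγ]
  have J2' := mul_le_mul_of_nonneg_left J2 (by positivity : 0 ≤ η * μ)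
  generalize ∑ n, p n * ‖ω - ωs n‖ ^ 2 = S at *
  generalize ∑ n, p n * L n (ωs n) = A at *
  generalize ∑ n, p n * L n ω = B at *
  generalize ∑ n, p n * Lstar n = C at *
  generalize ∑ n, p n * L n ωstar = D at *
  have hx : 0 < ℓ * η := by positivity
  have hk : 0 ≤ 1 - 2 * (ℓ * η) := by linarith
  have T1 := mul_le_mul_of_nonneg_left S2 hk
  have T2 : 0 ≤ 2 * η * ((1 - 2 * (ℓ * η)) * (1 - ℓ * η)) * (B - D) :=
    mul_nonneg (mul_nonneg (by positivity) (mul_nonneg hk (by linarith))) (by linarith)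
  have T3 : 0 ≤ 2 * (ℓ * η) * S := by positivity
  have T4 : 0 ≤ 2 * η ^ 2 * ℓ * (2 * (ℓ * η)) * (D - C) :=
    mul_nonneg (by positivity) (by linarith)
  have fin : S + 4 * ℓ * η ^ 2 * (A - C) - 2 * η * (A - D) ≤ 2 * S + 6 * ℓ * η ^ 2 * (D - C) := by
    linarith
  linarith
end

section
/- Let I be a nonempty finite index set, and let A, B, D, F > 0 be reals. For each n ∈ I let σ_n > 0, f_n > 0, β_n > 0, μ_n, and τ > 0 be reals satisfying the stationarity conditions τ·β_n² = σ_n·B + μ_n·F and 2·μ_n·D·f_n³ = A·σ_n for every n ∈ I, together with Σ_{n∈I} β_n = 1. Then for every n ∈ I: β_n = σ_n^{1/2}·(B + (A·F)/(2·D·f_n³))^{1/2} / ( Σ_{m∈I} σ_m^{1/2}·(B + (A·F)/(2·D·f_m³))^{1/2} ). -/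
/-- Closed-form optimal bandwidth ratio (equation (50) of the paper): eliminating the
multipliers `μₙ` and `τ` from the KKT stationarity conditions
`τ βₙ² = σₙ B + μₙ F` and `2 μₙ D fₙ³ = A σₙ` together with `∑ βₙ = 1` yields
`βₙ = σₙ^{1/2} (B + A F/(2 D fₙ³))^{1/2} / ∑ₘ σₘ^{1/2} (B + A F/(2 D fₘ³))^{1/2}`. -/
theorem kkt_optimal_bandwidth_ratio
    {ι : Type*} [Fintype ι] [Nonempty ι]
    (A B D F : ℝ) (hA : 0 < A) (hB : 0 < B) (hD : 0 < D) (hF : 0 < F)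
    (σ f β : ι → ℝ) (μ : ι → ℝ) (τ : ℝ)
    (hσ : ∀ n, 0 < σ n) (hf : ∀ n, 0 < f n) (hβ : ∀ n, 0 < β n) (hτ : 0 < τ)
    (hst1 : ∀ n, τ * (β n) ^ 2 = σ n * B + μ n * F)
    (hst2 : ∀ n, 2 * μ n * D * (f n) ^ 3 = A * σ n)
    (hsum : ∑ n, β n = 1) :
    ∀ n, β n = Real.sqrt (σ n) * Real.sqrt (B + A * F / (2 * D * (f n) ^ 3)) /
      ∑ m, Real.sqrt (σ m) * Real.sqrt (B + A * F / (2 * D * (f m) ^ 3)) := by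
  have key : ∀ n, Real.sqrt (σ n) * Real.sqrt (B + A * F / (2 * D * (f n) ^ 3)) =
      Real.sqrt τ * β n := by
    intro n
    have hfn := hf n
    have hpos : 0 < 2 * D * (f n) ^ 3 := by positivity
    have hμ : μ n = A * σ n / (2 * D * (f n) ^ 3) := by
      rw [eq_div_iff hpos.ne']
      linarith [hst2 n]
    have h : σ n * (B + A * F / (2 * D * (f n) ^ 3)) = τ * (β n) ^ 2 := by
      rw [hst1 n, hμ]
      ring
    rw [← Real.sqrt_mul (hσ n).le, h, Real.sqrt_mul hτ.le, Real.sqrt_sq (hβ n).le]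
  intro n
  have hs : Real.sqrt τ ≠ 0 := (Real.sqrt_pos.mpr hτ).ne'
  simp only [key]
  rw [← Finset.mul_sum, hsum, mul_one, mul_div_cancel_left₀ _ hs]
end
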